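/- The ordering 0237, 0267, 2367, 2368, 2348, 3678, 3478 of the facets of B is a shelling of B; in particular B is shellable. -/

import Mathlib

/-- The facets (maximal faces) of a collection of finite sets. -/
def facets {V : Type*} [DecidableEq V] (Φ : Finset (Finset V)) : Finset (Finset V) :=
  Φ.filter (fun F => ∀ G ∈ Φ, F ⊆ G → F = G)

/-- A list `L = [F_1, …, F_n]` is a shelling of the pure simplicial complex `Δ` if it is
an ordering of the facets of `Δ` without repetition such that for every `j`, the set
`{σ ⊆ F_j : σ ⊄ F_i for all i < j}` has a unique minimal element `R_j` (equivalently,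
a minimum element `R_j`). -/
def IsShelling {V : Type*} [DecidableEq V] (Δ : Finset (Finset V)) (L : List (Finset V)) :
    Prop :=
  L.Nodup ∧ (∀ F, F ∈ L ↔ F ∈ facets Δ) ∧
    ∀ j : Fin L.length, ∃ R : Finset V,
      (R ⊆ L.get j ∧ ∀ i : Fin L.length, i < j → ¬ R ⊆ L.get i) ∧
      (∀ σ : Finset V, σ ⊆ L.get j → (∀ i : Fin L.length, i < j → ¬ σ ⊆ L.get i) → R ⊆ σ)

/-- A pure simplicial complex is shellable if it admits a shelling. -/
def Shellable {V : Type*} [DecidableEq V] (Δ : Finset (Finset V)) : Prop :=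
  ∃ L : List (Finset V), IsShelling Δ L

/-- The simplicial complex generated by a list of facets. -/
def gen (L : List (Finset ℕ)) : Finset (Finset ℕ) :=
  L.toFinset.biUnion Finset.powerset

/-- The simplicial complex `B` on vertices `{0,2,3,4,6,7,8}` with seven facets
(the induced subcomplex of Ziegler's nonshellable 3-ball `Z` on `{0,2,3,4,6,7,8}`). -/
def B : Finset (Finset ℕ) :=
  gen [{0,2,3,7},{0,2,6,7},{2,3,6,7},{2,3,6,8},{2,3,4,8},{3,6,7,8},{3,4,7,8}]

theorem mem_gen {L : List (Finset ℕ)} {F : Finset ℕ} : F ∈ gen L ↔ ∃ G ∈ L, F ⊆ G := by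
  simp [gen]

/-- The facets of the complex generated by an antichain are the members of the antichain. -/
theorem mem_facets_gen_iff {L : List (Finset ℕ)} (hL : ∀ F ∈ L, ∀ G ∈ L, F ⊆ G → F = G)
    (F : Finset ℕ) : F ∈ facets (gen L) ↔ F ∈ L := by
  simp only [facets, Finset.mem_filter, mem_gen]
  constructor
  · rintro ⟨⟨G, hG, hFG⟩, hmax⟩
    exact hmax G ⟨G, hG, subset_rfl⟩ hFG ▸ hG
  · refine fun hF => ⟨⟨F, hF, subset_rfl⟩, ?_⟩
    rintro G ⟨H, hH, hGH⟩ hFG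
    have hFH := hL F hF H hH (hFG.trans hGH)
    exact hFG.antisymm (hFH ▸ hGH)

/-- A criterion for shellings of a complex generated by an antichain in which every quantifier
is bounded, so that its hypotheses are decidable. -/
theorem isShelling_gen {L : List (Finset ℕ)} (hnodup : L.Nodup)
    (hL : ∀ F ∈ L, ∀ G ∈ L, F ⊆ G → F = G)
    (hR : ∀ j : Fin L.length, ∃ R ∈ (L.get j).powerset,
      (∀ i : Fin L.length, i < j → ¬ R ⊆ L.get i) ∧
      ∀ σ ∈ (L.get j).powerset, (∀ i : Fin L.length, i < j → ¬ σ ⊆ L.get i) → R ⊆ σ) :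
    IsShelling (gen L) L := by
  refine ⟨hnodup, fun F => (mem_facets_gen_iff hL F).symm, fun j => ?_⟩
  obtain ⟨R, hRj, hnew, hmin⟩ := hR j
  exact ⟨R, ⟨Finset.mem_powerset.1 hRj, hnew⟩,
    fun σ hσ => hmin σ (Finset.mem_powerset.2 hσ)⟩

/-- The ordering 0237, 0267, 2367, 2368, 2348, 3678, 3478 of the facets of `B` is a
shelling; in particular `B` is shellable. -/
theorem B_shelling :
    IsShelling B [{0,2,3,7},{0,2,6,7},{2,3,6,7},{2,3,6,8},{2,3,4,8},{3,6,7,8},{3,4,7,8}] ∧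
      Shellable B := by
  have h : IsShelling B
      [{0,2,3,7},{0,2,6,7},{2,3,6,7},{2,3,6,8},{2,3,4,8},{3,6,7,8},{3,4,7,8}] :=
    isShelling_gen (by decide) (by decide) (by decide +kernel)
  exact ⟨h, _, h⟩
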